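/- Let R be an associative ring, G an infinite group with G ≠ G' (G is not equal to its derived subgroup), and A an RG-module with C_G(A) = 1. If A/C_A(G) is an infinite R-module and A/C_A(H) is a finite R-module for every proper subgroup H of G, then G is isomorphic to a quasi-cyclic q-group C_{q^∞} for some prime q. -/

import Mathlib

/-- `C_A(H)`: the `R`-submodule of `A` consisting of the elements fixed by every
element of the subgroup `H` of `G`. -/
def moduleCentralizer (R : Type*) [Ring R] {G : Type*} [Group G] (A : Type*)
    [AddCommGroup A] [Module R A] [DistribMulAction G A] [SMulCommClass G R A]
    (H : Subgroup G) : Submodule R A where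
  carrier := {a | ∀ g ∈ H, g • a = a}
  add_mem' := fun {a b} ha hb g hg => by rw [smul_add, ha g hg, hb g hg]
  zero_mem' := fun g _ => smul_zero g
  smul_mem' := fun r a ha g hg => by rw [smul_comm, ha g hg]

/-- The quasi-cyclic (Prüfer) `q`-group `C_{q^∞}`: the `q`-primary component of `ℚ/ℤ`. -/
def PruferGroup (q : ℕ) (hq : q.Prime) :
    AddSubgroup (ℚ ⧸ AddSubgroup.zmultiples (1 : ℚ)) :=
  haveI : Fact q.Prime := ⟨hq⟩
  AddCommGroup.primaryComponent (ℚ ⧸ AddSubgroup.zmultiples (1 : ℚ)) q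

/-!
If two proper subgroups `H`, `K` generated `G`, then `C_A(G) = C_A(H) ∩ C_A(K)` would have finite
index in `A`; so `⊤` is sup-irreducible in the subgroup lattice of `G`. As `G` is infinite, it is
not cyclic, and hence has no proper subgroup of finite index: such a subgroup together with
finitely many cyclic ones would generate `G`. So `G` acts trivially on every finite quotient
`A / C_A(N)` with `N` normal. Taking `N = G'⟨h⟩` shows that `h` fixes every `g • a - a`, and
faithfulness makes `G` abelian.

An infinite abelian group `B` with sup-irreducible `⊤` is divisible and torsion, and it is a
`p`-group for some prime `p`. Choose `s₀ ≠ 0` with `p • s₀ = 0`, successive `p`-th parts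
`p • sₙ₊₁ = sₙ`, and a character `f : B → ℚ/ℤ` with `f s₀ ≠ 0`. The subgroup generated by the `sₙ`
is mapped by `f` isomorphically onto `C_{p^∞} = f(B)`, so it is a complement of `ker f`, and
sup-irreducibility forces `ker f = 0`.
-/

theorem supIrred_orderIso_apply {α β : Type*} [SemilatticeSup α] [SemilatticeSup β] (e : α ≃o β)
    {a : α} (ha : SupIrred a) : SupIrred (e a) := by
  refine ⟨fun h => ha.not_isMin (e.isMin_apply.1 h), fun b c hbc => ?_⟩
  have hsup : e.symm b ⊔ e.symm c = a := by rw [← map_sup, hbc, e.symm_apply_apply]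
  simpa only [e.symm_apply_eq] using ha.2 hsup

section Group

variable {G : Type*} [Group G]

@[to_additive]
theorem supIrred_top_of_monoidHom_surjective {N : Type*} [Group N] [Nontrivial N]
    (hG : SupIrred (⊤ : Subgroup G)) {f : G →* N} (hf : Function.Surjective f) :
    SupIrred (⊤ : Subgroup N) := by
  refine ⟨fun h => top_ne_bot h.eq_bot, fun H K hHK => ?_⟩
  have hsup : H.comap f ⊔ K.comap f = ⊤ := by
    rw [Subgroup.comap_sup_eq f H K hf, hHK, Subgroup.comap_top]
  refine (hG.2 hsup).imp ?_ ?_ <;>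
    exact fun h => Subgroup.comap_injective hf (h.trans (Subgroup.comap_top f).symm)

@[to_additive]
theorem zpowers_ne_top_of_supIrred_top [Infinite G] (hG : SupIrred (⊤ : Subgroup G)) (g : G) :
    Subgroup.zpowers g ≠ ⊤ := by
  intro hg
  have horder : orderOf g = 0 := by
    rw [← Nat.card_zpowers, hg, Subgroup.card_top, Nat.card_eq_zero_of_infinite]
  have eq_one_of_generates {n : ℕ} (hn : Subgroup.zpowers (g ^ n) = ⊤) : n = 1 := by
    have hgcd := mem_zpowers_pow_iff.1 (hn ▸ Subgroup.mem_top g)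
    rwa [horder, Nat.gcd_zero_right] at hgcd
  have hsup : Subgroup.zpowers (g ^ 2) ⊔ Subgroup.zpowers (g ^ 3) = ⊤ := by
    rw [eq_top_iff, ← hg, Subgroup.zpowers_le]
    have hmem := Subgroup.mul_mem_sup
      (inv_mem (Subgroup.mem_zpowers (g ^ 2))) (Subgroup.mem_zpowers (g ^ 3))
    have hg3 : (g ^ 2)⁻¹ * g ^ 3 = g := by rw [pow_succ g 2, inv_mul_cancel_left]
    rwa [hg3] at hmem
  rcases hG.2 hsup with h2 | h3
  · exact absurd (eq_one_of_generates h2) (by decide)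
  · exact absurd (eq_one_of_generates h3) (by decide)

@[to_additive]
theorem subgroup_eq_top_of_finiteIndex [Infinite G] (hG : SupIrred (⊤ : Subgroup G))
    (H : Subgroup G) [H.FiniteIndex] : H = ⊤ := by
  classical
  have := Fintype.ofFinite (G ⧸ H)
  let C : Subgroup G := Finset.univ.sup fun q : G ⧸ H => Subgroup.zpowers q.out
  have hsup : H ⊔ C = ⊤ := by
    rw [Subgroup.eq_top_iff']
    intro g
    obtain ⟨h, hh⟩ := QuotientGroup.mk_out_eq_mul H g
    have hout : (g : G ⧸ H).out ∈ C :=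
      Finset.le_sup (f := fun q : G ⧸ H => Subgroup.zpowers q.out) (Finset.mem_univ (g : G ⧸ H))
        (Subgroup.mem_zpowers _)
    rw [eq_mul_inv_of_mul_eq hh.symm]
    exact mul_mem (Subgroup.mem_sup_right hout) (Subgroup.mem_sup_left (inv_mem h.2))
  refine (hG.2 hsup).resolve_right fun hC => ?_
  obtain ⟨q, -, hq⟩ := hG.finset_sup_eq hC
  exact zpowers_ne_top_of_supIrred_top hG q.out hq

@[to_additive]
theorem monoidHom_eq_one_of_finite_range (hG : ∀ (H : Subgroup G) [H.FiniteIndex], H = ⊤)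
    {N : Type*} [Group N] (f : G →* N) [Finite f.range] : f = 1 :=
  f.ker_eq_top_iff.1 (hG f.ker)

theorem monoidHom_eq_one_of_finite (hG : ∀ (H : Subgroup G) [H.FiniteIndex], H = ⊤)
    {M : Type*} [Monoid M] [Finite M] (f : G →* M) : f = 1 := by
  ext g
  exact congrArg Units.val
    (DFunLike.congr_fun (monoidHom_eq_one_of_finite_range hG f.toHomUnits) g)

/-- If all double differences of a faithful action vanish, then `(h - 1)(g - 1)` and
`(g - 1)(h - 1)` act in the same way, hence so do `h * g` and `g * h`. -/
theorem mul_comm_of_smul_smul_sub {A : Type*} [AddCommGroup A] [DistribMulAction G A]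
    [FaithfulSMul G A] (hfix : ∀ (g h : G) (a : A), h • (g • a - a) = g • a - a) (g h : G) :
    g * h = h * g := by
  refine eq_of_smul_eq_smul fun a : A => ?_
  have hg := hfix h g a
  have hh := hfix g h a
  rw [smul_sub, sub_eq_iff_eq_add] at hg hh
  rw [mul_smul, mul_smul, hg, hh]
  abel

end Group

section ModuleCentralizer

variable {R : Type*} [Ring R] {G : Type*} [Group G] {A : Type*} [AddCommGroup A] [Module R A]
  [DistribMulAction G A] [SMulCommClass G R A]

theorem finite_quotient_inf (P Q : Submodule R A) [Finite (A ⧸ P)] [Finite (A ⧸ Q)] :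
    Finite (A ⧸ P ⊓ Q) := by
  have hker : LinearMap.ker (P.mkQ.prod Q.mkQ) = P ⊓ Q := by
    rw [LinearMap.ker_prod, P.ker_mkQ, Q.ker_mkQ]
  rw [← hker]
  exact Finite.of_injective _ (LinearMap.quotKerEquivRange _).injective

theorem moduleCentralizer_bot : moduleCentralizer R A (⊥ : Subgroup G) = ⊤ := by
  rw [eq_top_iff]
  rintro a - g rfl
  exact one_smul G a

theorem moduleCentralizer_sup (H K : Subgroup G) :
    moduleCentralizer R A (H ⊔ K) = moduleCentralizer R A H ⊓ moduleCentralizer R A K := by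
  ext a
  exact sup_le_iff (a := H) (b := K) (c := MulAction.stabilizer G a)

theorem supIrred_top_of_finite_quotient_moduleCentralizer
    (hG : Infinite (A ⧸ moduleCentralizer R A (⊤ : Subgroup G)))
    (hH : ∀ H : Subgroup G, H ≠ ⊤ → Finite (A ⧸ moduleCentralizer R A H)) :
    SupIrred (⊤ : Subgroup G) := by
  refine ⟨fun hmin => ?_, fun H K hHK => ?_⟩
  · rw [hmin.eq_bot, moduleCentralizer_bot] at hG
    exact not_finite (A ⧸ (⊤ : Submodule R A))
  · by_contra! hne
    have := hH H hne.1
    have := hH K hne.2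
    rw [← hHK, moduleCentralizer_sup] at hG
    have := finite_quotient_inf (moduleCentralizer R A H) (moduleCentralizer R A K)
    exact not_finite (A ⧸ moduleCentralizer R A H ⊓ moduleCentralizer R A K)

theorem smul_mem_moduleCentralizer {H : Subgroup G} [H.Normal] (g : G) {a : A}
    (ha : a ∈ moduleCentralizer R A H) : g • a ∈ moduleCentralizer R A H := by
  intro h hh
  have hconj := ha (g⁻¹ * h * g) (Subgroup.Normal.conj_mem' ‹_› h hh g)
  rwa [mul_smul, mul_smul, inv_smul_eq_iff] at hconj

theorem smul_sub_mem_moduleCentralizer (hG : ∀ (H : Subgroup G) [H.FiniteIndex], H = ⊤)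
    (N : Subgroup G) [N.Normal] [Finite (A ⧸ moduleCentralizer R A N)] (g : G) (a : A) :
    g • a - a ∈ moduleCentralizer R A N := by
  let ρ : Representation R G (A ⧸ moduleCentralizer R A N) :=
    (Representation.ofDistribMulAction R G A).quotient _ fun g _ => smul_mem_moduleCentralizer g
  have : Finite (Module.End R (A ⧸ moduleCentralizer R A N)) :=
    Finite.of_injective _ DFunLike.coe_injective
  have hρ : ρ g = 1 := DFunLike.congr_fun (monoidHom_eq_one_of_finite hG ρ) g
  exact (Submodule.Quotient.eq _).1 (LinearMap.congr_fun hρ (Submodule.Quotient.mk a))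

theorem smul_smul_sub_of_finite_quotient_moduleCentralizer [Infinite G]
    (hsup : SupIrred (⊤ : Subgroup G)) (hG' : commutator G ≠ ⊤)
    (hH : ∀ H : Subgroup G, H ≠ ⊤ → Finite (A ⧸ moduleCentralizer R A H)) (g h : G) (a : A) :
    h • (g • a - a) = g • a - a := by
  let N : Subgroup G := commutator G ⊔ Subgroup.zpowers h
  have : N.Normal := Subgroup.Normal.of_commutator_le G le_sup_left
  have hN : N ≠ ⊤ := fun htop =>
    (hsup.2 htop).elim hG' (zpowers_ne_top_of_supIrred_top hsup h)
  have := hH N hN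
  exact smul_sub_mem_moduleCentralizer (R := R) (subgroup_eq_top_of_finiteIndex hsup) N g a h
    (Subgroup.mem_sup_right (Subgroup.mem_zpowers h))

end ModuleCentralizer

section AddCircle

theorem zmultiples_eq_setOf_nsmul_eq_zero {𝕜 : Type*} [AddCommGroup 𝕜] [IsAddTorsionFree 𝕜]
    {p : 𝕜} {w : AddCircle p} (hw : IsOfFinAddOrder w) :
    (AddSubgroup.zmultiples w : Set (AddCircle p)) = {z | addOrderOf w • z = 0} := by
  have hn : addOrderOf w ≠ 0 := hw.addOrderOf_pos.ne'
  have hreg : IsSMulRegular 𝕜 (addOrderOf w) := nsmul_right_injective hn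
  refine (AddCircle.finite_torsion_of_isSMulRegular p _ hreg).eq_of_subset_of_encard_le' ?_ ?_
  · rintro _ ⟨k, rfl⟩
    simp [smul_comm _ k]
  · refine (AddCircle.card_torsion_le_of_isSMulRegular p _ hn hreg).trans_eq ?_
    have : Finite (AddSubgroup.zmultiples w) := hw.finite_zmultiples
    rw [← Nat.card_zmultiples w]
    exact (ENat.card_eq_coe_natCard _).symm

theorem isAddTorsion_addCircle_rat : IsAddTorsion (AddCircle (1 : ℚ)) := fun z =>
  QuotientAddGroup.induction_on z fun r =>
    AddCircle.isOfFinAddOrder_iff_exists_rat_eq_div.2 ⟨r, by simp⟩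

end AddCircle

section AddCommGroup

variable {B : Type*} [AddCommGroup B]

theorem exists_addMonoidHom_addOrderOf_apply_eq {x : B} (hx : addOrderOf x = 0) {n : ℕ}
    (hn : 0 < n) : ∃ f : B →+ AddCircle (1 : ℚ), addOrderOf (f x) = n := by
  have hinj : Function.Injective (LinearMap.toSpanSingleton ℤ B x) :=
    injective_zsmul_iff_not_isOfFinAddOrder.2 (addOrderOf_eq_zero_iff.1 hx)
  obtain ⟨f, hf⟩ := CharacterModule.dual_surjective_of_injective _ hinj
    (CharacterModule.int.divByNat n)
  refine ⟨f, ?_⟩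
  have hfx : f x = ((1 / n : ℚ) : AddCircle (1 : ℚ)) := by
    have hone := DFunLike.congr_fun hf (1 : ℤ)
    change f ((1 : ℤ) • x) = (1 : ℤ) • (((n : ℚ)⁻¹ : ℚ) : AddCircle (1 : ℚ)) at hone
    rwa [one_smul, one_smul, ← one_div] at hone
  exact hfx ▸ AddCircle.addOrderOf_period_div hn

theorem nsmul_surjective_of_forall_finiteIndex (hB : ∀ (H : AddSubgroup B) [H.FiniteIndex], H = ⊤)
    {n : ℕ} (hn : 0 < n) : Function.Surjective (n • · : B → B) := by
  by_contra hsurj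
  let P : AddSubgroup B := (nsmulAddMonoidHom n).range
  obtain ⟨y, hy⟩ : ∃ y, y ∉ P := not_forall.1 hsurj
  obtain ⟨c, hc⟩ := CharacterModule.exists_character_apply_ne_zero_of_ne_zero
    (mt (QuotientAddGroup.eq_zero_iff y).1 hy)
  let f : B →+ AddCircle (1 : ℚ) := AddMonoidHom.comp c (QuotientAddGroup.mk' P)
  have hfinite : Finite f.range := by
    refine (AddCircle.finite_torsion (1 : ℚ) hn).subset ?_
    rintro _ ⟨b, rfl⟩
    have hmk : QuotientAddGroup.mk' P (n • b) = 0 := (QuotientAddGroup.eq_zero_iff _).2 ⟨b, rfl⟩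
    change n • f b = 0
    rw [← map_nsmul]
    exact (congrArg c hmk).trans (map_zero c)
  exact hc (DFunLike.congr_fun (addMonoidHom_eq_zero_of_finite_range hB f) y)

/-- The `p'`-component of an abelian group: the elements killed by an integer prime to `p`. For a
torsion group and a prime `p` it complements the `p`-primary component. -/
def coprimeComponent (B : Type*) [AddCommGroup B] (p : ℕ) : AddSubgroup B where
  carrier := {y | ∃ n : ℕ, n.Coprime p ∧ n • y = 0}
  zero_mem' := ⟨1, Nat.coprime_one_left p, smul_zero 1⟩
  add_mem' := by
    rintro a b ⟨m, hm, hma⟩ ⟨n, hn, hnb⟩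
    refine ⟨m * n, hm.mul_left hn, ?_⟩
    rw [smul_add, mul_smul, mul_smul, hnb, smul_comm, hma, smul_zero, smul_zero, add_zero]
  neg_mem' := by
    rintro a ⟨n, hn, hna⟩
    exact ⟨n, hn, by rw [smul_neg, hna, neg_zero]⟩

theorem primaryComponent_sup_coprimeComponent (hB : IsAddTorsion B) {p : ℕ} (hp : p.Prime) :
    AddCommGroup.primaryComponent B p ⊔ coprimeComponent B p = ⊤ := by
  rw [AddSubgroup.eq_top_iff']
  intro y
  obtain ⟨k, m, hm, horder⟩ :=
    Nat.exists_eq_pow_mul_and_not_dvd (hB y).addOrderOf_pos.ne' p hp.ne_one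
  have hcoprime : Nat.Coprime (p ^ k) m := ((hp.coprime_iff_not_dvd).2 hm).pow_left k
  obtain ⟨u, v, huv⟩ := Nat.isCoprime_iff_coprime.2 hcoprime
  have hkill : p ^ k • m • y = 0 := by rw [← mul_smul, ← horder, addOrderOf_nsmul_eq_zero]
  have hy : v • m • y + u • p ^ k • y = y := by
    rw [← natCast_zsmul y m, ← natCast_zsmul y (p ^ k), ← mul_smul, ← mul_smul, ← add_smul,
      add_comm, huv, one_smul]
  rw [← hy]
  refine AddSubgroup.add_mem_sup ⟨k, ?_⟩ ⟨m, ((hp.coprime_iff_not_dvd).2 hm).symm, ?_⟩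
  · rw [smul_comm, hkill, smul_zero]
  · rw [smul_comm, smul_comm m, hkill, smul_zero]

theorem exists_primaryComponent_eq_top (hB : SupIrred (⊤ : AddSubgroup B))
    (htorsion : IsAddTorsion B) : ∃ p : ℕ, p.Prime ∧ AddCommGroup.primaryComponent B p = ⊤ := by
  have : Nontrivial B := AddSubgroup.nontrivial_iff.1 ⟨⊤, ⊥, hB.ne_bot⟩
  obtain ⟨x, hx⟩ := exists_ne (0 : B)
  obtain ⟨p, hp, hpx⟩ := Nat.exists_prime_and_dvd (mt AddMonoid.addOrderOf_eq_one_iff.1 hx)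
  refine ⟨p, hp, (hB.2 (primaryComponent_sup_coprimeComponent htorsion hp)).resolve_right ?_⟩
  intro htop
  obtain ⟨n, hn, hnx⟩ : x ∈ coprimeComponent B p := htop ▸ AddSubgroup.mem_top x
  exact (hp.coprime_iff_not_dvd).1 hn.symm (hpx.trans (addOrderOf_dvd_of_nsmul_eq_zero hnx))

/-- An element of infinite order would have an image of order `6` under some character, whose range
is a torsion group with two nontrivial primary components. -/
theorem isAddTorsion_of_supIrred_top (hB : SupIrred (⊤ : AddSubgroup B)) : IsAddTorsion B := by
  intro x
  by_contra hx
  obtain ⟨f, hfx⟩ := exists_addMonoidHom_addOrderOf_apply_eq (addOrderOf_eq_zero_iff.2 hx)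
    (show 0 < 6 by norm_num)
  have : Nontrivial f.range := by
    refine ⟨f.rangeRestrict x, 0, fun h => ?_⟩
    have hzero : f x = 0 := congrArg Subtype.val h
    simp [hzero] at hfx
  obtain ⟨p, hp, htop⟩ := exists_primaryComponent_eq_top
    (supIrred_top_of_addMonoidHom_surjective hB f.rangeRestrict_surjective)
    (isAddTorsion_addCircle_rat.addSubgroup f.range)
  obtain ⟨k, hk⟩ : f.rangeRestrict x ∈ AddCommGroup.primaryComponent f.range p :=
    htop ▸ AddSubgroup.mem_top _
  have hdvd : 6 ∣ p ^ k := hfx ▸ addOrderOf_dvd_of_nsmul_eq_zero (congrArg Subtype.val hk)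
  have hp2 := (Nat.prime_dvd_prime_iff_eq Nat.prime_two hp).1
    (Nat.prime_two.dvd_of_dvd_pow ((by norm_num : 2 ∣ 6).trans hdvd))
  have hp3 := (Nat.prime_dvd_prime_iff_eq Nat.prime_three hp).1
    (Nat.prime_three.dvd_of_dvd_pow ((by norm_num : 3 ∣ 6).trans hdvd))
  omega

end AddCommGroup

/-- A sequence `s₀, s₁, …` of generators of the successive terms of a copy of
`C_p ⊂ C_{p²} ⊂ ⋯`, with `C_{p^(n+1)}` generated by `sₙ`, when `p` is prime. -/
structure IsPruferChain {B : Type*} [AddCommGroup B] (p : ℕ) (s : ℕ → B) : Prop where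
  zero_ne : s 0 ≠ 0
  nsmul_zero : p • s 0 = 0
  nsmul_succ : ∀ n, p • s (n + 1) = s n

namespace IsPruferChain

variable {B : Type*} [AddCommGroup B] {p : ℕ} {s : ℕ → B}

theorem exists_of_primaryComponent_eq_top [Nontrivial B]
    (hB : AddCommGroup.primaryComponent B p = ⊤) (hp : Function.Surjective (p • · : B → B)) :
    ∃ s : ℕ → B, IsPruferChain p s := by
  obtain ⟨y, hy⟩ := exists_ne (0 : B)
  have hyp : y ∈ AddCommGroup.primaryComponent B p := hB ▸ AddSubgroup.mem_top y
  obtain ⟨k, hk, hk'⟩ := Nat.exists_not_and_succ_of_not_zero_of_exists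
    (p := fun k => p ^ k • y = 0) (by simpa using hy) hyp
  refine ⟨fun n => (Function.surjInv hp)^[n] (p ^ k • y), hk, ?_, fun n => ?_⟩
  · rwa [pow_succ', mul_smul] at hk'
  · simpa only [Function.iterate_succ_apply'] using Function.surjInv_eq hp _

theorem map {C : Type*} [AddCommGroup C] (hs : IsPruferChain p s) (f : B →+ C)
    (hf : f (s 0) ≠ 0) : IsPruferChain p (f ∘ s) where
  zero_ne := hf
  nsmul_zero := by rw [Function.comp_apply, ← map_nsmul, hs.nsmul_zero, map_zero]
  nsmul_succ n := by rw [Function.comp_apply, ← map_nsmul, hs.nsmul_succ, Function.comp_apply]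

theorem pow_nsmul (hs : IsPruferChain p s) (n : ℕ) : p ^ n • s n = s 0 := by
  induction n with
  | zero => rw [pow_zero, one_smul]
  | succ n ih => rw [pow_succ, mul_smul, hs.nsmul_succ, ih]

theorem addOrderOf_eq [Fact p.Prime] (hs : IsPruferChain p s) (n : ℕ) :
    addOrderOf (s n) = p ^ (n + 1) := by
  apply addOrderOf_eq_prime_pow
  · rw [hs.pow_nsmul]
    exact hs.zero_ne
  · rw [pow_succ', mul_smul, hs.pow_nsmul, hs.nsmul_zero]

theorem mem_iSup_zmultiples_iff (hs : IsPruferChain p s) {y : B} :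
    y ∈ ⨆ n, AddSubgroup.zmultiples (s n) ↔ ∃ n, y ∈ AddSubgroup.zmultiples (s n) := by
  have hmono : Monotone fun n => AddSubgroup.zmultiples (s n) := by
    refine monotone_nat_of_le_succ fun n => ?_
    rw [AddSubgroup.zmultiples_le, ← hs.nsmul_succ n]
    exact nsmul_mem (AddSubgroup.mem_zmultiples _) p
  exact AddSubgroup.mem_iSup_of_directed hmono.directed_le

theorem disjoint_ker [Fact p.Prime] {C : Type*} [AddCommGroup C] (hs : IsPruferChain p s)
    (f : B →+ C) (hf : f (s 0) ≠ 0) : Disjoint (⨆ n, AddSubgroup.zmultiples (s n)) f.ker := by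
  rw [AddSubgroup.disjoint_def]
  intro y hy hfy
  obtain ⟨n, k, rfl⟩ := hs.mem_iSup_zmultiples_iff.1 hy
  have hfk : k • (f ∘ s) n = 0 := (map_zsmul f k (s n)).symm.trans hfy
  rwa [← addOrderOf_dvd_iff_zsmul_eq_zero, (hs.map f hf).addOrderOf_eq, ← hs.addOrderOf_eq,
    addOrderOf_dvd_iff_zsmul_eq_zero] at hfk

theorem iSup_zmultiples_eq_pruferGroup (hp : p.Prime) {s : ℕ → AddCircle (1 : ℚ)}
    (hs : IsPruferChain p s) : ⨆ n, AddSubgroup.zmultiples (s n) = PruferGroup p hp := by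
  have : Fact p.Prime := ⟨hp⟩
  ext z
  rw [hs.mem_iSup_zmultiples_iff]
  constructor
  · rintro ⟨n, k, rfl⟩
    refine ⟨n + 1, ?_⟩
    change p ^ (n + 1) • k • s n = 0
    rw [smul_comm, ← hs.addOrderOf_eq, addOrderOf_nsmul_eq_zero, smul_zero]
  · rintro ⟨k, hk⟩
    refine ⟨k, ?_⟩
    rw [← SetLike.mem_coe, zmultiples_eq_setOf_nsmul_eq_zero (isAddTorsion_addCircle_rat _)]
    change addOrderOf (s k) • z = 0
    rw [hs.addOrderOf_eq, pow_succ', mul_smul, hk, smul_zero]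

end IsPruferChain

theorem exists_addEquiv_pruferGroup {B : Type*} [AddCommGroup B] [Infinite B]
    (hB : SupIrred (⊤ : AddSubgroup B)) :
    ∃ (p : ℕ) (hp : p.Prime), Nonempty (B ≃+ PruferGroup p hp) := by
  obtain ⟨p, hp, hprimary⟩ := exists_primaryComponent_eq_top hB (isAddTorsion_of_supIrred_top hB)
  have : Fact p.Prime := ⟨hp⟩
  have hdivisible : Function.Surjective (p • · : B → B) :=
    nsmul_surjective_of_forall_finiteIndex (addSubgroup_eq_top_of_finiteIndex hB) hp.pos
  obtain ⟨s, hs⟩ := IsPruferChain.exists_of_primaryComponent_eq_top hprimary hdivisible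
  obtain ⟨c, hc⟩ := CharacterModule.exists_character_apply_ne_zero_of_ne_zero hs.zero_ne
  let f : B →+ AddCircle (1 : ℚ) := c
  let D : AddSubgroup B := ⨆ n, AddSubgroup.zmultiples (s n)
  have hD : D.map f = PruferGroup p hp := by
    rw [← (hs.map f hc).iSup_zmultiples_eq_pruferGroup hp, AddSubgroup.map_iSup]
    simp only [AddMonoidHom.map_zmultiples, Function.comp_apply]
  have hrange : f.range = PruferGroup p hp := by
    refine le_antisymm ?_ (hD ▸ AddSubgroup.map_le_range f D)
    rintro _ ⟨y, rfl⟩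
    obtain ⟨k, hk⟩ : y ∈ AddCommGroup.primaryComponent B p := hprimary ▸ AddSubgroup.mem_top y
    exact ⟨k, by rw [← map_nsmul, hk, map_zero]⟩
  have hcompl : IsCompl D f.ker :=
    ⟨hs.disjoint_ker f hc, AddSubgroup.map_eq_range_iff.1 (hD.trans hrange.symm)⟩
  have hker : f.ker = ⊥ := by
    rcases hB.2 hcompl.sup_eq_top with hDtop | hkertop
    · exact eq_bot_of_top_isCompl (hDtop ▸ hcompl)
    · exact absurd (show s 0 ∈ f.ker from hkertop ▸ AddSubgroup.mem_top (s 0)) hc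
  exact ⟨p, hp, ⟨(AddMonoidHom.ofInjective (f.ker_eq_bot_iff.1 hker)).trans
    (AddEquiv.addSubgroupCongr hrange)⟩⟩

/-- Theorem 2.3: let `A` be an `RG`-module where `G` is an infinite group with `G ≠ G'`
acting faithfully (`C_G(A) = 1`). If `A/C_A(G)` is an infinite `R`-module and `A/C_A(H)`
is a finite `R`-module for every proper subgroup `H` of `G`, then `G` is isomorphic to a
quasi-cyclic `q`-group for some prime `q`. -/
theorem finite_proper_subgroups_prufer (R : Type*) [Ring R] (G : Type*) [Group G] [Infinite G]
    (A : Type*) [AddCommGroup A] [Module R A] [DistribMulAction G A] [SMulCommClass G R A]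
    (hG' : commutator G ≠ ⊤)
    (hfaith : ∀ g : G, (∀ a : A, g • a = a) → g = 1)
    (hG : Infinite (A ⧸ moduleCentralizer R A (⊤ : Subgroup G)))
    (hH : ∀ H : Subgroup G, H ≠ ⊤ → Finite (A ⧸ moduleCentralizer R A H)) :
    ∃ (q : ℕ) (hq : q.Prime), Nonempty (G ≃* Multiplicative (PruferGroup q hq)) := by
  have : FaithfulSMul G A := ⟨fun {g h} hgh =>
    inv_mul_eq_one.1 (hfaith _ fun a => by rw [mul_smul, inv_smul_eq_iff, hgh])⟩
  have hsup := supIrred_top_of_finite_quotient_moduleCentralizer hG hH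
  have hcomm : ∀ g h : G, g * h = h * g := mul_comm_of_smul_smul_sub
    (smul_smul_sub_of_finite_quotient_moduleCentralizer (A := A) hsup hG' hH)
  let _ : CommGroup G := { ‹Group G› with mul_comm := hcomm }
  obtain ⟨q, hq, ⟨e⟩⟩ := exists_addEquiv_pruferGroup
    (supIrred_orderIso_apply Subgroup.toAddSubgroup hsup)
  exact ⟨q, hq, ⟨e.toMultiplicativeRight⟩⟩
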